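/- Let P₀, P∞ be skew-symmetric forms on finite-dimensional complex V with ∞ ∉ Λ (i.e. P∞ has the generic corank r), and let R = P∞^{-1}P₀ be the recursion operator on L^⊥/L. Then for each λ ∈ Λ the λ-eigenspace of R equals (Ker P_λ)/(Ker P_λ ∩ L), and the spectrum of R equals Λ ∩ ℂ. -/

import Mathlib

/-!
For every finite parameter `t`, the map `A - t • B` acts on `ker (A - s • B)` as `(s - t) • B`.
Let `N` be the sum of the kernels over the finite parameters `s` of minimal corank. There are
infinitely many of them, while finitely many already span `N`, so one of the others, `t`, satisfies
`(A - t • B) N = B N`. As `ker (A - t • B) ≤ N`, comparing dimensions shows `ker B ≤ N`, hence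
`N = L`, and the same comparison then gives `(A - t • B) L = B L` for every `t`.

For forms, the image of `L` determines its orthogonal complement, so `L^⊥` is the same for all
members of the pencil. For `ξ ∈ L^⊥`, the class of `ξ` is a `μ`-eigenvector of `R` iff `P_μ(ξ, ·)`
vanishes on `L^⊥`, which by double orthogonality in `P_μ` means `ξ ∈ L + ker P_μ`. Finally
`dim (A - μ • B) L = dim B L` forces `dim (L ∩ ker P_μ) = r`, so `ker P_μ ≤ L` exactly when `μ` is
not exceptional.
-/

open Module LinearMap

variable {V : Type*} [AddCommGroup V] [Module ℂ V]

/-- The pencil `P_λ = P₀ - λ P_∞` of bilinear forms, `λ ∈ ℂ ∪ {∞}` (`∞` is `none`,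
with `P_∞ := P∞`). -/
noncomputable def pencil (P0 Pinf : V →ₗ[ℂ] V →ₗ[ℂ] ℂ) : Option ℂ → (V →ₗ[ℂ] V →ₗ[ℂ] ℂ)
  | none => Pinf
  | some l => P0 - l • Pinf

/-- The generic (minimal) corank `r` of the pencil. -/
noncomputable def genericCorank (P0 Pinf : V →ₗ[ℂ] V →ₗ[ℂ] ℂ) : ℕ :=
  sInf (Set.range fun l : Option ℂ => finrank ℂ ↥(LinearMap.ker (pencil P0 Pinf l)))

/-- The exceptional set `Λ` of pencil parameters where the corank exceeds `r`. -/
def exceptional (P0 Pinf : V →ₗ[ℂ] V →ₗ[ℂ] ℂ) : Set (Option ℂ) :=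
  {l | genericCorank P0 Pinf < finrank ℂ ↥(LinearMap.ker (pencil P0 Pinf l))}

/-- `L = Σ_{λ ∉ Λ} Ker P_λ`. -/
noncomputable def Lspace (P0 Pinf : V →ₗ[ℂ] V →ₗ[ℂ] ℂ) : Submodule ℂ V :=
  ⨆ l ∈ {l : Option ℂ | l ∉ exceptional P0 Pinf}, LinearMap.ker (pencil P0 Pinf l)

/-- The common skew-orthogonal complement `L^⊥` (computed here with `P_∞`). -/
noncomputable def Lperp (P0 Pinf : V →ₗ[ℂ] V →ₗ[ℂ] ℂ) : Submodule ℂ V :=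
  LinearMap.BilinForm.orthogonal (pencil P0 Pinf none) (Lspace P0 Pinf)

/-- `L` viewed as a submodule of `L^⊥`. -/
noncomputable def LinPerp (P0 Pinf : V →ₗ[ℂ] V →ₗ[ℂ] ℂ) : Submodule ℂ ↥(Lperp P0 Pinf) :=
  (Lspace P0 Pinf).comap (Lperp P0 Pinf).subtype

/-- The quotient `L^⊥ / L`, carrying the recursion operator `R = P_∞⁻¹ P₀`. -/
abbrev Qspace (P0 Pinf : V →ₗ[ℂ] V →ₗ[ℂ] ℂ) := ↥(Lperp P0 Pinf) ⧸ LinPerp P0 Pinf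

section LinearAlgebra

variable {K E F : Type*} [DivisionRing K] [AddCommGroup E] [Module K E] [AddCommGroup F]
  [Module K F]

theorem exists_generalizedInverse (f : E →ₗ[K] F) : ∃ g : F →ₗ[K] E, ∀ x, f (g (f x)) = f x := by
  obtain ⟨s, hs⟩ := f.rangeRestrict.exists_rightInverse_of_surjective f.range_rangeRestrict
  obtain ⟨g, hg⟩ := s.exists_extend
  refine ⟨g, fun x => ?_⟩
  have hgx : g (f x) = s (f.rangeRestrict x) := LinearMap.congr_fun hg (f.rangeRestrict x)
  rw [hgx]
  exact congrArg Subtype.val (LinearMap.congr_fun hs (f.rangeRestrict x))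

theorem finrank_map_add_finrank_inf_ker [FiniteDimensional K E] (f : E →ₗ[K] F)
    (N : Submodule K E) :
    finrank K (N.map f) + finrank K (N ⊓ ker f : Submodule K E) = finrank K N := by
  rw [← (f.domRestrict N).finrank_range_add_finrank_ker, range_domRestrict, ker_domRestrict,
    ← Submodule.map_comap_subtype, Submodule.finrank_map_subtype_eq]

theorem exists_finset_iSup_eq {ι α : Type*} [CompleteLattice α] [WellFoundedGT α] (f : ι → α)
    (S : Set ι) : ∃ I : Finset ι, ↑I ⊆ S ∧ ⨆ i ∈ I, f i = ⨆ i ∈ S, f i := by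
  classical
  obtain ⟨J, hJ, hsup⟩ := CompleteLattice.WellFoundedGT.isSupFiniteCompact α (f '' S)
  obtain ⟨I, hI, rfl⟩ := Finset.subset_set_image_iff.1 hJ
  refine ⟨I, hI, ?_⟩
  rw [← sSup_image, hsup, Finset.sup_image, Finset.sup_eq_iSup]
  rfl

theorem map_mkQ_submoduleOf_eq_bot_iff {A E : Type*} [Ring A] [AddCommGroup E] [Module A E]
    {L M N : Submodule A E} (hN : N ≤ M) :
    (N.submoduleOf M).map (L.submoduleOf M).mkQ = ⊥ ↔ N ≤ L := by
  rw [← le_ker_iff_map, Submodule.ker_mkQ]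
  exact ⟨fun h x hx => h (x := ⟨x, hN hx⟩) hx, fun h _ hx => h hx⟩

end LinearAlgebra

section LinearPencil

section CommRing

variable {K E F : Type*} [CommRing K] [AddCommGroup E] [Module K E] [AddCommGroup F] [Module K F]

theorem map_sub_smul_ker_sub_smul (A B : E →ₗ[K] F) (s t : K) :
    (ker (A - s • B)).map (A - t • B) = (ker (A - s • B)).map ((s - t) • B) := by
  refine SetLike.coe_injective (Set.image_congr fun x hx => ?_)
  have hAx : A x = s • B x := sub_eq_zero.1 hx
  simp [hAx, sub_smul]

theorem map_sub_smul_iSup_ker_le (A B : E →ₗ[K] F) (S : Set K) (t : K) :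
    (⨆ s ∈ S, ker (A - s • B)).map (A - t • B) ≤ (⨆ s ∈ S, ker (A - s • B)).map B := by
  simp only [Submodule.map_iSup, map_sub_smul_ker_sub_smul]
  exact iSup₂_mono fun s _ => Submodule.map_smul_le_map _ B _

end CommRing

variable {K E F : Type*} [Field K] [AddCommGroup E] [Module K E] [AddCommGroup F] [Module K F]

theorem finite_setOf_finrank_ker_lt_finrank_ker_sub_smul [FiniteDimensional K E]
    (A B : E →ₗ[K] F) : {t : K | finrank K (ker B) < finrank K (ker (A - t • B))}.Finite := by
  obtain ⟨g, hg⟩ := exists_generalizedInverse B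
  refine (End.finite_hasEigenvalue (g ∘ₗ A)).subset ?_
  intro t (ht : finrank K (ker B) < finrank K (ker (A - t • B)))
  by_contra hev
  set T : End K E := g ∘ₗ A - t • 1 with hT
  have hT_inj : Function.Injective T := by
    rw [← ker_eq_bot, hT, ← End.eigenspace_def]
    exact not_not.1 (End.hasEigenvalue_iff.not.1 hev)
  have hT_maps : (ker (A - t • B)).map T ≤ ker B := by
    rintro _ ⟨x, hx, rfl⟩
    have hAx : A x = t • B x := sub_eq_zero.1 hx
    simp [hT, hAx, hg]
  refine ht.not_ge ?_
  rw [← (Submodule.equivMapOfInjective T hT_inj _).symm.finrank_eq]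
  exact Submodule.finrank_mono hT_maps

theorem map_sub_smul_iSup_ker_of_notMem (A B : E →ₗ[K] F) {S : Set K} {t : K} (ht : t ∉ S) :
    (⨆ s ∈ S, ker (A - s • B)).map (A - t • B) = (⨆ s ∈ S, ker (A - s • B)).map B := by
  simp only [Submodule.map_iSup, map_sub_smul_ker_sub_smul]
  exact biSup_congr fun s hs =>
    Submodule.map_smul B _ _ (sub_ne_zero.2 (ne_of_mem_of_not_mem hs ht))

theorem ker_le_iSup_ker_sub_smul [FiniteDimensional K E] {A B : E →ₗ[K] F} {S : Set K}
    (hS : S.Infinite) (hmin : ∀ t ∈ S, finrank K (ker B) ≤ finrank K (ker (A - t • B))) :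
    ker B ≤ ⨆ t ∈ S, ker (A - t • B) := by
  set N := ⨆ t ∈ S, ker (A - t • B)
  obtain ⟨t, htS, hmap⟩ : ∃ t ∈ S, N.map (A - t • B) = N.map B := by
    obtain ⟨I, -, hIN : _ = N⟩ := exists_finset_iSup_eq (fun t => ker (A - t • B)) S
    obtain ⟨t, htS, htI⟩ := hS.exists_notMem_finset I
    exact ⟨t, htS, hIN ▸ map_sub_smul_iSup_ker_of_notMem A B (Finset.mem_coe.not.2 htI)⟩
  have hkt : N ⊓ ker (A - t • B) = ker (A - t • B) :=
    inf_eq_right.2 (le_iSup₂_of_le t htS le_rfl)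
  have hrank_t := finrank_map_add_finrank_inf_ker (A - t • B) N
  have hrank_B := finrank_map_add_finrank_inf_ker B N
  rw [hmap, hkt] at hrank_t
  have hle : finrank K (ker B) ≤ finrank K (N ⊓ ker B : Submodule K E) := by
    have := hmin t htS
    lia
  exact inf_eq_right.1 (Submodule.eq_of_le_of_finrank_le inf_le_right hle)

/-- The subspace `L` attached to the pencil `A - t • B`: the sum of the kernels over the finite
parameters `t` whose corank is at most that of `B`. The kernel of `B` itself (`t = ∞`) is left out
of the sum, since `ker_le_regularKernelSum` shows that it is contained in it. -/
def regularKernelSum (A B : E →ₗ[K] F) : Submodule K E :=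
  ⨆ t ∈ {t : K | finrank K (ker (A - t • B)) ≤ finrank K (ker B)}, ker (A - t • B)

theorem ker_sub_smul_le_regularKernelSum {A B : E →ₗ[K] F} {t : K}
    (ht : finrank K (ker (A - t • B)) ≤ finrank K (ker B)) :
    ker (A - t • B) ≤ regularKernelSum A B :=
  le_iSup₂_of_le t ht le_rfl

variable [FiniteDimensional K E] [Infinite K] {A B : E →ₗ[K] F}

theorem ker_le_regularKernelSum
    (hmin : ∀ t : K, finrank K (ker B) ≤ finrank K (ker (A - t • B))) :
    ker B ≤ regularKernelSum A B := by
  refine ker_le_iSup_ker_sub_smul ?_ fun t _ => hmin t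
  simpa only [Set.compl_ofPred, not_lt] using
    (finite_setOf_finrank_ker_lt_finrank_ker_sub_smul A B).infinite_compl

theorem map_sub_smul_regularKernelSum
    (hmin : ∀ t : K, finrank K (ker B) ≤ finrank K (ker (A - t • B))) (t : K) :
    (regularKernelSum A B).map (A - t • B) = (regularKernelSum A B).map B := by
  by_cases ht : finrank K (ker (A - t • B)) ≤ finrank K (ker B)
  · refine Submodule.eq_of_le_of_finrank_le (map_sub_smul_iSup_ker_le A B _ t) ?_
    have hrank_t := finrank_map_add_finrank_inf_ker (A - t • B) (regularKernelSum A B)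
    have hrank_B := finrank_map_add_finrank_inf_ker B (regularKernelSum A B)
    rw [inf_eq_right.2 (ker_sub_smul_le_regularKernelSum ht)] at hrank_t
    rw [inf_eq_right.2 (ker_le_regularKernelSum hmin)] at hrank_B
    lia
  · exact map_sub_smul_iSup_ker_of_notMem A B ht

theorem ker_sub_smul_le_regularKernelSum_iff
    (hmin : ∀ t : K, finrank K (ker B) ≤ finrank K (ker (A - t • B))) {t : K} :
    ker (A - t • B) ≤ regularKernelSum A B ↔
      finrank K (ker (A - t • B)) ≤ finrank K (ker B) := by
  refine ⟨fun hle => ?_, ker_sub_smul_le_regularKernelSum⟩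
  have hrank_t := finrank_map_add_finrank_inf_ker (A - t • B) (regularKernelSum A B)
  have hrank_B := finrank_map_add_finrank_inf_ker B (regularKernelSum A B)
  rw [map_sub_smul_regularKernelSum hmin, inf_eq_right.2 hle] at hrank_t
  rw [inf_eq_right.2 (ker_le_regularKernelSum hmin)] at hrank_B
  lia

end LinearPencil

section BilinForm

variable {K E : Type*} [CommRing K] [AddCommGroup E] [Module K E]

theorem orthogonal_eq_dualCoannihilator_map (B : LinearMap.BilinForm K E) (N : Submodule K E) :
    B.orthogonal N = (N.map B).dualCoannihilator := by
  ext x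
  simp [Submodule.mem_dualCoannihilator]

theorem ker_le_orthogonal {B : LinearMap.BilinForm K E} (hB : B.IsRefl) (N : Submodule K E) :
    ker B ≤ B.orthogonal N :=
  LinearMap.BilinForm.orthogonal_top_eq_ker hB ▸ LinearMap.BilinForm.orthogonal_le le_top

theorem mem_sup_ker_iff_forall_mem_orthogonal {K E : Type*} [Field K] [AddCommGroup E]
    [Module K E] [FiniteDimensional K E] {B : LinearMap.BilinForm K E}
    {N : Submodule K E} {x : E} : x ∈ N ⊔ ker B ↔ ∀ y ∈ B.orthogonal N, B x y = 0 := by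
  rw [← Submodule.comap_map_eq, Submodule.mem_comap,
    ← Subspace.dualCoannihilator_dualAnnihilator_eq (W := N.map B),
    ← orthogonal_eq_dualCoannihilator_map, Submodule.mem_dualAnnihilator]

end BilinForm

section RecursionOperator

variable {K E : Type*} [Field K] [AddCommGroup E] [Module K E]

/-- `R` is the recursion operator `Q⁻¹P` on `L^⊥ / L`, where `⊥` is taken with respect to `Q`:
the form `P` on `L^⊥ / L` is `Q(R ·, ·)`. The quotient is by `L ∩ L^⊥`, so that `L ≤ L^⊥` need not
be known beforehand. -/
def IsRecursionOperator (P Q : LinearMap.BilinForm K E) (L : Submodule K E)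
    (R : End K (Q.orthogonal L ⧸ L.submoduleOf (Q.orthogonal L))) : Prop :=
  ∀ ξ ξ' : Q.orthogonal L, R (Submodule.Quotient.mk ξ) = Submodule.Quotient.mk ξ' →
    ∀ η : Q.orthogonal L, Q ξ' η = P ξ η

namespace IsRecursionOperator

variable [FiniteDimensional K E] {P Q : LinearMap.BilinForm K E} {L : Submodule K E}
  {R : End K (Q.orthogonal L ⧸ L.submoduleOf (Q.orthogonal L))}

theorem apply_mk_eq_mk_iff (hR : IsRecursionOperator P Q L R) (hQL : ker Q ≤ L)
    {ξ ξ' : Q.orthogonal L} :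
    R (Submodule.Quotient.mk ξ) = Submodule.Quotient.mk ξ' ↔
      ∀ η : Q.orthogonal L, Q ξ' η = P ξ η := by
  refine ⟨hR ξ ξ', fun h => ?_⟩
  obtain ⟨ζ, hζ⟩ := Submodule.Quotient.mk_surjective _ (R (Submodule.Quotient.mk ξ))
  have hdiff : (ζ - ξ' : E) ∈ L ⊔ ker Q :=
    mem_sup_ker_iff_forall_mem_orthogonal.2 fun η hη => by
      rw [map_sub, LinearMap.sub_apply, hR ξ ζ hζ.symm ⟨η, hη⟩, h ⟨η, hη⟩, sub_self]
  rw [← hζ, Submodule.Quotient.eq]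
  rwa [sup_eq_left.2 hQL] at hdiff

variable {μ : K}

theorem mk_mem_eigenspace_iff (hR : IsRecursionOperator P Q L R) (hQL : ker Q ≤ L)
    (horth : (P - μ • Q).orthogonal L = Q.orthogonal L) {ξ : Q.orthogonal L} :
    Submodule.Quotient.mk ξ ∈ End.eigenspace R μ ↔ (ξ : E) ∈ L ⊔ ker (P - μ • Q) := by
  rw [End.mem_eigenspace_iff, ← Submodule.Quotient.mk_smul, hR.apply_mk_eq_mk_iff hQL,
    mem_sup_ker_iff_forall_mem_orthogonal, horth]
  simp [sub_eq_zero, eq_comm (a := P _ _)]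

theorem eigenspace_eq_map_mkQ (hR : IsRecursionOperator P Q L R) (hQL : ker Q ≤ L)
    (horth : (P - μ • Q).orthogonal L = Q.orthogonal L) (hL : L ≤ Q.orthogonal L)
    (hker : ker (P - μ • Q) ≤ Q.orthogonal L) :
    End.eigenspace R μ = ((ker (P - μ • Q)).submoduleOf (Q.orthogonal L)).map
      (L.submoduleOf (Q.orthogonal L)).mkQ := by
  refine Submodule.comap_injective_of_surjective (Submodule.mkQ_surjective _) ?_
  rw [Submodule.comap_map_mkQ, ← Submodule.submoduleOf_sup_of_le hL hker]
  ext ξ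
  exact hR.mk_mem_eigenspace_iff hQL horth

end IsRecursionOperator

theorem stmt13_general [Infinite K] [FiniteDimensional K E] {P Q : LinearMap.BilinForm K E}
    (hrefl : ∀ t : K, (P - t • Q).IsRefl)
    (hmin : ∀ t : K, finrank K (ker Q) ≤ finrank K (ker (P - t • Q)))
    {L : Submodule K E} (hL : L = regularKernelSum P Q)
    {R : End K (Q.orthogonal L ⧸ L.submoduleOf (Q.orthogonal L))}
    (hR : IsRecursionOperator P Q L R) (μ : K) :
    End.eigenspace R μ = ((ker (P - μ • Q)).submoduleOf (Q.orthogonal L)).map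
        (L.submoduleOf (Q.orthogonal L)).mkQ ∧
      (End.HasEigenvalue R μ ↔ finrank K (ker Q) < finrank K (ker (P - μ • Q))) := by
  subst hL
  set L := regularKernelSum P Q
  have horth (t : K) : (P - t • Q).orthogonal L = Q.orthogonal L := by
    simp only [orthogonal_eq_dualCoannihilator_map, L, map_sub_smul_regularKernelSum hmin]
  have hker (t : K) : ker (P - t • Q) ≤ Q.orthogonal L :=
    horth t ▸ ker_le_orthogonal (hrefl t) L
  have hisotropic : L ≤ Q.orthogonal L := iSup₂_le fun t _ => hker t
  have heig := hR.eigenspace_eq_map_mkQ (ker_le_regularKernelSum hmin) (horth μ) hisotropic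
    (hker μ)
  refine ⟨heig, ?_⟩
  rw [End.hasEigenvalue_iff, heig, ne_eq, map_mkQ_submoduleOf_eq_bot_iff (hker μ),
    ker_sub_smul_le_regularKernelSum_iff hmin, not_le]

end RecursionOperator

theorem genericCorank_le_finrank_ker (P0 Pinf : V →ₗ[ℂ] V →ₗ[ℂ] ℂ) (l : Option ℂ) :
    genericCorank P0 Pinf ≤ finrank ℂ (ker (pencil P0 Pinf l)) :=
  Nat.sInf_le ⟨l, rfl⟩

theorem finrank_ker_eq_genericCorank {P0 Pinf : V →ₗ[ℂ] V →ₗ[ℂ] ℂ} {l : Option ℂ}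
    (hl : l ∉ exceptional P0 Pinf) :
    finrank ℂ (ker (pencil P0 Pinf l)) = genericCorank P0 Pinf :=
  le_antisymm (not_lt.1 hl) (genericCorank_le_finrank_ker P0 Pinf l)

theorem some_mem_exceptional_iff {P0 Pinf : V →ₗ[ℂ] V →ₗ[ℂ] ℂ}
    (hinf : none ∉ exceptional P0 Pinf) {t : ℂ} :
    some t ∈ exceptional P0 Pinf ↔ finrank ℂ (ker Pinf) < finrank ℂ (ker (P0 - t • Pinf)) := by
  have hrank : finrank ℂ (ker Pinf) = genericCorank P0 Pinf :=
    finrank_ker_eq_genericCorank (l := none) hinf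
  rw [hrank]
  rfl

theorem finrank_ker_le_of_none_notMem_exceptional {P0 Pinf : V →ₗ[ℂ] V →ₗ[ℂ] ℂ}
    (hinf : none ∉ exceptional P0 Pinf) (t : ℂ) :
    finrank ℂ (ker Pinf) ≤ finrank ℂ (ker (P0 - t • Pinf)) :=
  (finrank_ker_eq_genericCorank (l := none) hinf).trans_le
    (genericCorank_le_finrank_ker P0 Pinf (some t))

theorem Lspace_eq_regularKernelSum [FiniteDimensional ℂ V] {P0 Pinf : V →ₗ[ℂ] V →ₗ[ℂ] ℂ}
    (hinf : none ∉ exceptional P0 Pinf) : Lspace P0 Pinf = regularKernelSum P0 Pinf := by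
  have hmin := finrank_ker_le_of_none_notMem_exceptional hinf
  apply le_antisymm
  · refine iSup₂_le ?_
    rintro (_ | t) ht
    · exact ker_le_regularKernelSum hmin
    · exact ker_sub_smul_le_regularKernelSum (not_lt.1 ((some_mem_exceptional_iff hinf).not.1 ht))
  · exact iSup₂_le fun t ht =>
      le_iSup₂_of_le (some t) ((some_mem_exceptional_iff hinf).not.2 (not_lt.2 ht)) le_rfl

/-- The `λ`-eigenspace of the recursion operator `R = P_∞⁻¹P₀` on `L^⊥/L` equals
`(Ker P_λ)/(Ker P_λ ∩ L)`, and the spectrum of `R` equals `Λ ∩ ℂ`. -/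
theorem stmt13 [FiniteDimensional ℂ V] (P0 Pinf : V →ₗ[ℂ] V →ₗ[ℂ] ℂ)
    (h0 : ∀ v, P0 v v = 0) (hinf : ∀ v, Pinf v v = 0)
    (hinfreg : none ∉ exceptional P0 Pinf)
    (R : Qspace P0 Pinf →ₗ[ℂ] Qspace P0 Pinf)
    (hR : ∀ ξ ξ' : ↥(Lperp P0 Pinf),
      R (Submodule.Quotient.mk ξ) = Submodule.Quotient.mk ξ' →
      ∀ η : ↥(Lperp P0 Pinf),
        pencil P0 Pinf none (ξ' : V) (η : V) = pencil P0 Pinf (some 0) (ξ : V) (η : V)) :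
    (∀ μ : ℂ, (some μ : Option ℂ) ∈ exceptional P0 Pinf →
      Module.End.eigenspace R μ =
        Submodule.map (LinPerp P0 Pinf).mkQ
          ((LinearMap.ker (pencil P0 Pinf (some μ))).comap (Lperp P0 Pinf).subtype)) ∧
    (∀ μ : ℂ, Module.End.HasEigenvalue R μ ↔ (some μ : Option ℂ) ∈ exceptional P0 Pinf) := by
  have hrefl (t : ℂ) : LinearMap.BilinForm.IsRefl (P0 - t • Pinf) :=
    LinearMap.BilinForm.IsAlt.isRefl fun v => by simp [h0, hinf]
  have hrec : IsRecursionOperator P0 Pinf (Lspace P0 Pinf) R :=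
    fun ξ ξ' h η => by simpa [pencil] using hR ξ ξ' h η
  have hgen := stmt13_general hrefl (finrank_ker_le_of_none_notMem_exceptional hinfreg)
    (Lspace_eq_regularKernelSum hinfreg) hrec
  exact ⟨fun μ _ => (hgen μ).1, fun μ => (hgen μ).2.trans (some_mem_exceptional_iff hinfreg).symm⟩
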